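/- arXiv:2006.07228 — 2 statements merged into one kernel-verified Lean document; each statement's English description precedes it below -/
import Mathlib

section
/- Fix an agent i, a synchronization interval of length K ∈ ℕ, and a constant learning rate a > 0 used throughout the interval. Assume: (i) g_i and h are L-Lipschitz (L > 0) in the sense ‖g_i(θ,w) − g_i(θ′,w′)‖ ≤ L(‖θ−θ′‖ + ‖w−w′‖) and likewise for h; (ii) ‖g_i(θ,w) − g(θ,w)‖ ≤ μ_g for all (θ,w) (bounded gradient divergence); (iii) the agent's generator gradient coincides with the pooled generator gradient h. Suppose the local iterates start from the synchronized values (w^i_0, θ^i_0) = (v_0, φ_0) (deterministic), and for 0 ≤ m < K evolve as w^i_{m+1} = w^i_m + a·G_m and θ^i_{m+1} = θ^i_m + a·H_m, where G_m, H_m are integrable random vectors (stochastic gradients) satisfying E‖G_m − g_i(θ^i_m, w^i_m)‖ ≤ σ_g and E‖H_m − h(θ^i_m, w^i_m)‖ ≤ σ_h, while the centralized comparison iterates evolve deterministically from the same initial point as v_{m+1} = v_m + a·g(φ_m, v_m) and φ_{m+1} = φ_m + a·h(φ_m, v_m). Then for every 0 ≤ m ≤ K: E‖w^i_m − v_m‖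 + E‖θ^i_m − φ_m‖ ≤ ((σ_g + μ_g + σ_h)/(2L)) · ((1 + 2aL)^m − 1). -/
open MeasureTheory Finset

/-!
One step of size `a` moves the agent and the centralized iterate apart by at most `a` times the
distance between their update directions. That distance splits into the stochastic error of the
sampled gradient, the Lipschitz displacement of the local gradient between the two current points,
and the divergence of the local gradient from the pooled one. Taking expectations and adding the
discriminator and generator inequalities, the total expected deviation `D m` satisfies
`D (m + 1) ≤ (1 + 2aL) * D m + a * (σg + μg + σh)` with `D 0 = 0`; the claimed bound solves this
recursion with equality.
-/

theorem le_div_mul_pow_sub_one_of_le_mul_add {𝕜 : Type*} [Field 𝕜] [LinearOrder 𝕜]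
    [IsStrictOrderedRing 𝕜] {u : ℕ → 𝕜} {a b β : 𝕜} {m : ℕ} (ha : 0 ≤ a) (hβ : 0 < β)
    (hu₀ : u 0 ≤ 0) (hu : ∀ k < m, u (k + 1) ≤ (1 + a * β) * u k + a * b) :
    u m ≤ b / β * ((1 + a * β) ^ m - 1) := by
  have step_mono : Monotone fun t : 𝕜 => (1 + a * β) * t + a * b := fun s t hst => by
    dsimp only
    gcongr
  refine step_mono.seq_le_seq (y := fun k => b / β * ((1 + a * β) ^ k - 1)) m ?_ hu ?_
  · simpa using hu₀
  · intro k _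
    apply le_of_eq
    field_simp
    ring

section OneStep

variable {Ω E F X : Type*} [MeasurableSpace Ω] {P : Measure Ω} [NormedAddCommGroup E]
  [NormedAddCommGroup F] [NormedAddCommGroup X]

theorem integrable_comp_of_lipschitzWith [IsFiniteMeasure P] {K : NNReal} {f : E → X}
    (hf : LipschitzWith K f) {Y : Ω → E} (hY : Integrable Y P) :
    Integrable (fun ω => f (Y ω)) P := by
  have centered_lipschitz : LipschitzWith K fun y => f y - f 0 := by
    simpa using hf.sub (LipschitzWith.const (f 0))
  have centered_integrable : Integrable (fun ω => f (Y ω) - f 0) P :=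
    memLp_one_iff_integrable.1 <|
      centered_lipschitz.comp_memLp (sub_self _) (memLp_one_iff_integrable.2 hY)
  simpa only [Pi.add_def, sub_add_cancel] using centered_integrable.add (integrable_const (f 0))

theorem lipschitzWith_uncurry_of_norm_sub_le {f : E → F → X} {L : ℝ}
    (hf : ∀ x x' y y', ‖f x y - f x' y'‖ ≤ L * (‖x - x'‖ + ‖y - y'‖)) :
    LipschitzWith (L.toNNReal + L.toNNReal) (Function.uncurry f) :=
  LipschitzWith.uncurry
    (fun y => .of_dist_le' fun x x' => by simpa [dist_eq_norm] using hf x x' y y)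
    (fun x => .of_dist_le' fun y y' => by simpa [dist_eq_norm] using hf x x y y')

theorem integrable_of_eq_add_smul [NormedSpace ℝ E] {Z ξ : ℕ → Ω → E} {a : ℝ} {K : ℕ}
    (hZ₀ : Integrable (Z 0) P) (hξ : ∀ m < K, Integrable (ξ m) P)
    (hZ : ∀ m < K, Z (m + 1) = fun ω => Z m ω + a • ξ m ω) :
    ∀ m ≤ K, Integrable (Z m) P := by
  intro m hm
  induction m with
  | zero => exact hZ₀
  | succ m ih =>
    rw [hZ m hm]
    exact (ih (Nat.le_of_succ_le hm)).add ((hξ m hm).smul a)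

theorem norm_add_smul_sub_add_smul_le [NormedSpace ℝ X] {a : ℝ} (ha : 0 ≤ a) (x y ξ η ζ : X) :
    ‖(x + a • ξ) - (y + a • ζ)‖ ≤ ‖x - y‖ + a * (‖ξ - η‖ + ‖η - ζ‖) :=
  calc ‖(x + a • ξ) - (y + a • ζ)‖ = ‖(x - y) + a • (ξ - ζ)‖ := by
        rw [add_sub_add_comm, smul_sub]
    _ ≤ ‖x - y‖ + a * ‖ξ - ζ‖ := by
        simpa only [norm_smul, Real.norm_of_nonneg ha] using norm_add_le (x - y) (a • (ξ - ζ))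
    _ ≤ ‖x - y‖ + a * (‖ξ - η‖ + ‖η - ζ‖) := by
        gcongr
        exact norm_sub_le_norm_sub_add_norm_sub ξ η ζ

theorem integral_norm_add_smul_sub_add_smul_le [NormedSpace ℝ X] {a : ℝ} (ha : 0 ≤ a)
    {x y ξ η ζ : Ω → X} (hxy : Integrable (fun ω => x ω - y ω) P)
    (hξη : Integrable (fun ω => ξ ω - η ω) P) (hηζ : Integrable (fun ω => η ω - ζ ω) P) :
    ∫ ω, ‖(x ω + a • ξ ω) - (y ω + a • ζ ω)‖ ∂P ≤
      ∫ ω, ‖x ω - y ω‖ ∂P + a * (∫ ω, ‖ξ ω - η ω‖ ∂P + ∫ ω, ‖η ω - ζ ω‖ ∂P) := by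
  have direction_integrable : Integrable (fun ω => a * (‖ξ ω - η ω‖ + ‖η ω - ζ ω‖)) P :=
    (hξη.norm.add hηζ.norm).const_mul a
  calc ∫ ω, ‖(x ω + a • ξ ω) - (y ω + a • ζ ω)‖ ∂P
      ≤ ∫ ω, (‖x ω - y ω‖ + a * (‖ξ ω - η ω‖ + ‖η ω - ζ ω‖)) ∂P :=
        integral_mono_of_nonneg (.of_forall fun _ => norm_nonneg _)
          (hxy.norm.add direction_integrable)
          (.of_forall fun ω => norm_add_smul_sub_add_smul_le ha _ _ _ _ _)
    _ = ∫ ω, ‖x ω - y ω‖ ∂P + a * (∫ ω, ‖ξ ω - η ω‖ ∂P + ∫ ω, ‖η ω - ζ ω‖ ∂P) := by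
        rw [integral_add hxy.norm direction_integrable, integral_const_mul,
          integral_add hξη.norm hηζ.norm]

theorem integral_norm_comp_sub_le [IsProbabilityMeasure P] {f : E → F → X} {x₀ : E} {y₀ : F}
    {c : X} {L μ : ℝ} (hf : ∀ x y, ‖f x y - f x₀ y₀‖ ≤ L * (‖x - x₀‖ + ‖y - y₀‖))
    (hc : ‖f x₀ y₀ - c‖ ≤ μ) {x : Ω → E} {y : Ω → F} (hx : Integrable x P)
    (hy : Integrable y P) :
    ∫ ω, ‖f (x ω) (y ω) - c‖ ∂P ≤
      L * (∫ ω, ‖x ω - x₀‖ ∂P + ∫ ω, ‖y ω - y₀‖ ∂P) + μ := by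
  have hx' : Integrable (fun ω => ‖x ω - x₀‖) P := (hx.sub (integrable_const x₀)).norm
  have hy' : Integrable (fun ω => ‖y ω - y₀‖) P := (hy.sub (integrable_const y₀)).norm
  have displacement_integrable : Integrable (fun ω => L * (‖x ω - x₀‖ + ‖y ω - y₀‖)) P :=
    (hx'.add hy').const_mul L
  calc ∫ ω, ‖f (x ω) (y ω) - c‖ ∂P
      ≤ ∫ ω, (L * (‖x ω - x₀‖ + ‖y ω - y₀‖) + μ) ∂P :=
        integral_mono_of_nonneg (.of_forall fun _ => norm_nonneg _)
          (displacement_integrable.add (integrable_const μ))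
          (.of_forall fun ω =>
            (norm_sub_le_norm_sub_add_norm_sub _ (f x₀ y₀) _).trans (add_le_add (hf _ _) hc))
    _ = L * (∫ ω, ‖x ω - x₀‖ ∂P + ∫ ω, ‖y ω - y₀‖ ∂P) + μ := by
        rw [integral_add displacement_integrable (integrable_const μ), integral_const_mul,
          integral_add hx' hy', integral_const, probReal_univ, one_smul]

theorem integral_norm_sgd_step_sub_le [IsProbabilityMeasure P] [NormedSpace ℝ X]
    {f : E → F → X} {a L σ μ : ℝ} (ha : 0 ≤ a)
    (hf : ∀ x x' y y', ‖f x y - f x' y'‖ ≤ L * (‖x - x'‖ + ‖y - y'‖))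
    {x : Ω → E} {y : Ω → F} {z ξ : Ω → X} {x₀ : E} {y₀ : F} {z₀ c : X}
    (hx : Integrable x P) (hy : Integrable y P) (hz : Integrable z P) (hξ : Integrable ξ P)
    (hσ : ∫ ω, ‖ξ ω - f (x ω) (y ω)‖ ∂P ≤ σ) (hc : ‖f x₀ y₀ - c‖ ≤ μ) :
    ∫ ω, ‖(z ω + a • ξ ω) - (z₀ + a • c)‖ ∂P ≤
      ∫ ω, ‖z ω - z₀‖ ∂P +
        a * (σ + (L * (∫ ω, ‖x ω - x₀‖ ∂P + ∫ ω, ‖y ω - y₀‖ ∂P) + μ)) := by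
  have hfxy : Integrable (fun ω => f (x ω) (y ω)) P :=
    integrable_comp_of_lipschitzWith (lipschitzWith_uncurry_of_norm_sub_le hf) (hx.prodMk hy)
  refine (integral_norm_add_smul_sub_add_smul_le ha (hz.sub (integrable_const z₀))
    (hξ.sub hfxy) (hfxy.sub (integrable_const c))).trans ?_
  gcongr
  exact integral_norm_comp_sub_le (fun x y => hf x x₀ y y₀) hc hx hy

end OneStep

theorem fedgan_lemma1_general
    {E F Ω : Type*} [NormedAddCommGroup E] [NormedSpace ℝ E] [NormedAddCommGroup F]
    [NormedSpace ℝ F] [MeasurableSpace Ω] {P : Measure Ω} [IsProbabilityMeasure P]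
    {gi g : E → F → F} {h : E → F → E} {L a σg σh μg : ℝ} {K : ℕ} (hL : 0 < L) (ha : 0 ≤ a)
    (hgiLip : ∀ θ θ' w w', ‖gi θ w - gi θ' w'‖ ≤ L * (‖θ - θ'‖ + ‖w - w'‖))
    (hhLip : ∀ θ θ' w w', ‖h θ w - h θ' w'‖ ≤ L * (‖θ - θ'‖ + ‖w - w'‖))
    {W G : ℕ → Ω → F} {Θ H : ℕ → Ω → E} {v : ℕ → F} {φ : ℕ → E}
    (hdiv : ∀ m < K, ‖gi (φ m) (v m) - g (φ m) (v m)‖ ≤ μg)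
    (hGint : ∀ m < K, Integrable (G m) P) (hHint : ∀ m < K, Integrable (H m) P)
    (hW0 : W 0 = fun _ => v 0) (hΘ0 : Θ 0 = fun _ => φ 0)
    (hWrec : ∀ m < K, W (m + 1) = fun ω => W m ω + a • G m ω)
    (hΘrec : ∀ m < K, Θ (m + 1) = fun ω => Θ m ω + a • H m ω)
    (hGerr : ∀ m < K, ∫ ω, ‖G m ω - gi (Θ m ω) (W m ω)‖ ∂P ≤ σg)
    (hHerr : ∀ m < K, ∫ ω, ‖H m ω - h (Θ m ω) (W m ω)‖ ∂P ≤ σh)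
    (hvrec : ∀ m < K, v (m + 1) = v m + a • g (φ m) (v m))
    (hφrec : ∀ m < K, φ (m + 1) = φ m + a • h (φ m) (v m)) :
    ∀ m ≤ K,
      (∫ ω, ‖W m ω - v m‖ ∂P) + (∫ ω, ‖Θ m ω - φ m‖ ∂P) ≤
        (σg + μg + σh) / (2 * L) * ((1 + 2 * a * L) ^ m - 1) := by
  have hWint := integrable_of_eq_add_smul (P := P) (hW0 ▸ integrable_const _) hGint hWrec
  have hΘint := integrable_of_eq_add_smul (P := P) (hΘ0 ▸ integrable_const _) hHint hΘrec
  intro m hm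
  rw [show 2 * a * L = a * (2 * L) by ring]
  refine le_div_mul_pow_sub_one_of_le_mul_add
    (u := fun k => (∫ ω, ‖W k ω - v k‖ ∂P) + ∫ ω, ‖Θ k ω - φ k‖ ∂P)
    ha (by positivity) (by simp [hW0, hΘ0]) fun k hk => ?_
  have hkK : k < K := hk.trans_le hm
  have discriminator_step := integral_norm_sgd_step_sub_le (z₀ := v k) ha hgiLip
    (hΘint k hkK.le) (hWint k hkK.le) (hWint k hkK.le) (hGint k hkK) (hGerr k hkK) (hdiv k hkK)
  have generator_step := integral_norm_sgd_step_sub_le (x₀ := φ k) (y₀ := v k) (z₀ := φ k)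
    (c := h (φ k) (v k)) (μ := 0) ha hhLip
    (hΘint k hkK.le) (hWint k hkK.le) (hΘint k hkK.le) (hHint k hkK) (hHerr k hkK) (by simp)
  simp only [hWrec k hkK, hΘrec k hkK, hvrec k hkK, hφrec k hkK]
  linarith

/-- Lemma 1 of the FedGAN paper: within one synchronization interval of length `K`,
the expected deviation of agent `i`'s local stochastic-gradient iterates from the
centralized comparison iterates is bounded by
`(σg + μg + σh)/(2L) * ((1 + 2aL)^m - 1)`. -/
theorem fedgan_lemma1
    {dθ dw : ℕ} {Ω : Type*} [MeasurableSpace Ω]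
    (P : Measure Ω) [IsProbabilityMeasure P]
    (gi g : EuclideanSpace ℝ (Fin dθ) → EuclideanSpace ℝ (Fin dw) → EuclideanSpace ℝ (Fin dw))
    (h : EuclideanSpace ℝ (Fin dθ) → EuclideanSpace ℝ (Fin dw) → EuclideanSpace ℝ (Fin dθ))
    (L a σg σh μg : ℝ) (K : ℕ)
    (hL : 0 < L) (ha : 0 < a)
    (hgiLip : ∀ θ θ' w w', ‖gi θ w - gi θ' w'‖ ≤ L * (‖θ - θ'‖ + ‖w - w'‖))
    (hhLip : ∀ θ θ' w w', ‖h θ w - h θ' w'‖ ≤ L * (‖θ - θ'‖ + ‖w - w'‖))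
    (hdiv : ∀ θ w, ‖gi θ w - g θ w‖ ≤ μg)
    (W : ℕ → Ω → EuclideanSpace ℝ (Fin dw))
    (Θ : ℕ → Ω → EuclideanSpace ℝ (Fin dθ))
    (G : ℕ → Ω → EuclideanSpace ℝ (Fin dw))
    (H : ℕ → Ω → EuclideanSpace ℝ (Fin dθ))
    (v : ℕ → EuclideanSpace ℝ (Fin dw))
    (φ : ℕ → EuclideanSpace ℝ (Fin dθ))
    (hWint : ∀ m, Integrable (W m) P) (hΘint : ∀ m, Integrable (Θ m) P)
    (hGint : ∀ m, Integrable (G m) P) (hHint : ∀ m, Integrable (H m) P)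
    (hW0 : W 0 = fun _ => v 0) (hΘ0 : Θ 0 = fun _ => φ 0)
    (hWrec : ∀ m < K, W (m + 1) = fun ω => W m ω + a • G m ω)
    (hΘrec : ∀ m < K, Θ (m + 1) = fun ω => Θ m ω + a • H m ω)
    (hGerr : ∀ m < K, ∫ ω, ‖G m ω - gi (Θ m ω) (W m ω)‖ ∂P ≤ σg)
    (hHerr : ∀ m < K, ∫ ω, ‖H m ω - h (Θ m ω) (W m ω)‖ ∂P ≤ σh)
    (hvrec : ∀ m < K, v (m + 1) = v m + a • g (φ m) (v m))
    (hφrec : ∀ m < K, φ (m + 1) = φ m + a • h (φ m) (v m)) :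
    ∀ m ≤ K,
      (∫ ω, ‖W m ω - v m‖ ∂P) + (∫ ω, ‖Θ m ω - φ m‖ ∂P) ≤
        (σg + μg + σh) / (2 * L) * ((1 + 2 * a * L) ^ m - 1) :=
  fedgan_lemma1_general hL ha.le hgiLip hhLip (fun _ _ => hdiv _ _) (fun m _ => hGint m)
    (fun m _ => hHint m) hW0 hΘ0 hWrec hΘrec hGerr hHerr hvrec hφrec
end

section
/- Suppose sup_n ‖z_n‖ < ∞ and that the residuals satisfy sup_{k ≥ 0} ‖δ_{n,n+k}‖ → 0 as n → ∞, where δ_{n,n+k} := z_{n+k} − z_n − Σ_{j=0}^{k−1} a(n+j)·q(z_{n+j}). Then for every T > 0: lim_{s → ∞} sup_{t ∈ [s, s+T]} ‖z̄(t) − z^s(t)‖ = 0, where z^s is the forward solution of the limiting ODE started from the interpolated trajectory at time s. -/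
open MeasureTheory Finset Filter

/-!
Put `x n = ∑ j < n, a j • q (z j)`. The residuals are the differences of `z - x`, so they vanish
uniformly exactly when `z - x` is a Cauchy sequence. Interpolation is linear and preserves Cauchy
sequences, hence beyond a large time `s` the interpolation of `z` stays uniformly close to the
interpolation of `x`, translated to agree with it at time `s`. The latter has right derivative
`q (z n)` on the `n`-th grid cell, and consecutive iterates get arbitrarily close, so it solves
`ẏ = q y` up to a small error. Grönwall's inequality compares it with the true solution.
-/

open scoped Topology NNReal

noncomputable section

section GridIndex

variable {α : Type*} [LinearOrder α] {t : ℕ → α} {u : α} {n : ℕ}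

/-- The index `n` of the cell `[t n, t (n + 1))` of the grid `t` that contains `u`. It is the junk
value `0` for `u < t 0`, and for `u` beyond all grid points. -/
def gridIndex (t : ℕ → α) (u : α) : ℕ :=
  sInf {n | u < t (n + 1)}

lemma lt_apply_gridIndex_succ [NoMaxOrder α] (ht_top : Tendsto t atTop atTop) (u : α) :
    u < t (gridIndex t u + 1) :=
  Nat.sInf_mem (s := {n | u < t (n + 1)})
    (((tendsto_add_atTop_iff_nat 1).2 ht_top).eventually_gt_atTop u).exists

lemma apply_gridIndex_le (hu : t 0 ≤ u) : t (gridIndex t u) ≤ u := by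
  rcases hidx : gridIndex t u with _ | k
  · exact hu
  · have hk : k < gridIndex t u := by lia
    exact not_lt.1 (Nat.notMem_of_lt_sInf hk)

lemma le_gridIndex [NoMaxOrder α] (ht : Monotone t) (ht_top : Tendsto t atTop atTop)
    (hu : t n ≤ u) : n ≤ gridIndex t u :=
  Nat.le_of_lt_succ (ht.reflect_lt (hu.trans_lt (lt_apply_gridIndex_succ ht_top u)))

lemma gridIndex_eq [NoMaxOrder α] (ht : Monotone t) (ht_top : Tendsto t atTop atTop)
    (hu : u ∈ Set.Ico (t n) (t (n + 1))) : gridIndex t u = n :=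
  le_antisymm (Nat.sInf_le hu.2) (le_gridIndex ht ht_top hu.1)

lemma tendsto_gridIndex_atTop [NoMaxOrder α] (ht : Monotone t)
    (ht_top : Tendsto t atTop atTop) : Tendsto (gridIndex t) atTop atTop :=
  tendsto_atTop.2 fun n => (eventually_ge_atTop (t n)).mono fun _ => le_gridIndex ht ht_top

end GridIndex

section LinearInterp

variable {E : Type*} [AddCommGroup E] [Module ℝ E] {t : ℕ → ℝ} {x : ℕ → E} {u : ℝ} {n : ℕ}

/-- The piecewise linear interpolation of the sequence `x` along the grid `t`, with value `x n` at
`t n`. It is meaningful from `t 0` onwards. -/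
def linearInterp (t : ℕ → ℝ) (x : ℕ → E) (u : ℝ) : E :=
  let n := gridIndex t u
  AffineMap.lineMap (x n) (x (n + 1)) ((u - t n) / (t (n + 1) - t n))

lemma linearInterp_sub (t : ℕ → ℝ) (x y : ℕ → E) (u : ℝ) :
    linearInterp t (x - y) u = linearInterp t x u - linearInterp t y u := by
  simp only [linearInterp, Pi.sub_apply, ← vsub_eq_sub, AffineMap.lineMap_vsub_lineMap]

lemma linearInterp_of_mem_Icc (ht : StrictMono t) (ht_top : Tendsto t atTop atTop)
    (hu : u ∈ Set.Icc (t n) (t (n + 1))) :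
    linearInterp t x u =
      AffineMap.lineMap (x n) (x (n + 1)) ((u - t n) / (t (n + 1) - t n)) := by
  rcases hu.2.lt_or_eq with hlt | rfl
  · simp only [linearInterp, gridIndex_eq ht.monotone ht_top ⟨hu.1, hlt⟩]
  · have hcell : t (n + 1) - t n ≠ 0 := (sub_pos.2 (ht n.lt_succ_self)).ne'
    have hidx : gridIndex t (t (n + 1)) = n + 1 :=
      gridIndex_eq ht.monotone ht_top ⟨le_rfl, ht (n + 1).lt_succ_self⟩
    simp only [linearInterp, hidx, sub_self, zero_div, div_self hcell, AffineMap.lineMap_apply_zero,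
      AffineMap.lineMap_apply_one]

lemma linearInterp_mem_segment (ht_top : Tendsto t atTop atTop) (hu : t 0 ≤ u) :
    linearInterp t x u ∈ segment ℝ (x (gridIndex t u)) (x (gridIndex t u + 1)) := by
  have hle := apply_gridIndex_le hu
  have hlt := lt_apply_gridIndex_succ ht_top u
  rw [segment_eq_image_lineMap]
  exact Set.mem_image_of_mem _
    ⟨div_nonneg (by linarith) (by linarith), div_le_one_of_le₀ (by linarith) (by linarith)⟩

end LinearInterp

section LinearInterpAnalysis

variable {E : Type*} [NormedAddCommGroup E] [NormedSpace ℝ E] {t : ℕ → ℝ} {x : ℕ → E}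
  {u : ℝ} {n : ℕ}

lemma continuousOn_linearInterp (ht : StrictMono t) (ht_top : Tendsto t atTop atTop)
    (x : ℕ → E) : ContinuousOn (linearInterp t x) (Set.Ici (t 0)) := by
  have hcell (n : ℕ) : ContinuousOn (linearInterp t x) (Set.Icc (t n) (t (n + 1))) :=
    ContinuousOn.congr (by fun_prop) fun _ => linearInterp_of_mem_Icc ht ht_top
  have hinitial (n : ℕ) : ContinuousOn (linearInterp t x) (Set.Icc (t 0) (t n)) := by
    induction n with
    | zero => simp
    | succ n ih =>
      rw [← Set.Icc_union_Icc_eq_Icc (ht.monotone n.zero_le) (ht.monotone n.le_succ)]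
      exact ih.union_of_isClosed (hcell n) isClosed_Icc isClosed_Icc
  intro u hu
  obtain ⟨n, hn⟩ := (ht_top.eventually_gt_atTop u).exists
  refine (hinitial n u ⟨hu, hn.le⟩).mono_of_mem_nhdsWithin ?_
  exact inter_mem_nhdsWithin _ (Iic_mem_nhds hn)

lemma hasDerivWithinAt_linearInterp (ht : StrictMono t) (ht_top : Tendsto t atTop atTop)
    (x : ℕ → E) (hu : u ∈ Set.Ico (t n) (t (n + 1))) :
    HasDerivWithinAt (linearInterp t x) ((t (n + 1) - t n)⁻¹ • (x (n + 1) - x n))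
      (Set.Ici u) u := by
  have hratio : HasDerivAt (fun r => (r - t n) / (t (n + 1) - t n)) (t (n + 1) - t n)⁻¹ u := by
    simpa only [id, one_div] using ((hasDerivAt_id u).sub_const (t n)).div_const (t (n + 1) - t n)
  have hline : HasDerivAt
      (fun r => AffineMap.lineMap (x n) (x (n + 1)) ((r - t n) / (t (n + 1) - t n)))
      ((t (n + 1) - t n)⁻¹ • (x (n + 1) - x n)) u :=
    AffineMap.hasDerivAt_lineMap.scomp u hratio
  refine hline.hasDerivWithinAt.congr_of_eventuallyEq ?_
    (linearInterp_of_mem_Icc ht ht_top (Set.Ico_subset_Icc_self hu))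
  filter_upwards [Icc_mem_nhdsGE hu.2] with r hr
  exact linearInterp_of_mem_Icc ht ht_top ⟨hu.1.trans hr.1, hr.2⟩

lemma cauchySeq_linearInterp (ht : Monotone t) (ht_top : Tendsto t atTop atTop)
    (hx : CauchySeq x) : CauchySeq (linearInterp t x) := by
  refine Metric.cauchySeq_iff.2 fun ε hε => ?_
  obtain ⟨N, hN⟩ := Metric.cauchySeq_iff'.1 hx (ε / 2) (half_pos hε)
  have hball (u : ℝ) (hu : t N ≤ u) : dist (linearInterp t x u) (x N) < ε / 2 :=
    have hidx : N ≤ gridIndex t u := le_gridIndex ht ht_top hu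
    (convex_ball (x N) (ε / 2)).segment_subset (hN _ hidx) (hN _ (hidx.trans (Nat.le_succ _)))
      (linearInterp_mem_segment ht_top ((ht N.zero_le).trans hu))
  refine ⟨t N, fun u hu v hv => ?_⟩
  linarith [hball u hu, hball v hv,
    dist_triangle_right (linearInterp t x u) (linearInterp t x v) (x N)]

lemma tendsto_dist_gridIndex_linearInterp (ht : Monotone t) (ht_top : Tendsto t atTop atTop)
    (hx : Tendsto (fun n => dist (x n) (x (n + 1))) atTop (𝓝 0)) :
    Tendsto (fun u => dist (x (gridIndex t u)) (linearInterp t x u)) atTop (𝓝 0) := by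
  refine squeeze_zero' (.of_forall fun _ => dist_nonneg) ?_
    (hx.comp (tendsto_gridIndex_atTop ht ht_top))
  filter_upwards [eventually_ge_atTop (t 0)] with u hu
  have hsplit := dist_add_dist_of_mem_segment (linearInterp_mem_segment (x := x) ht_top hu)
  exact (le_add_of_nonneg_right dist_nonneg).trans_eq hsplit

end LinearInterpAnalysis

section Tracking

variable {E : Type*} [NormedAddCommGroup E] [NormedSpace ℝ E] {t : ℕ → ℝ} {q : E → E} {K : ℝ≥0}
  {z : ℕ → E}

lemma exists_pos_add_gronwallBound_le (K c T : ℝ) {ε : ℝ} (hε : 0 < ε) :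
    ∃ η > 0, η + gronwallBound 0 K (c * η) T ≤ ε := by
  have hcont : Continuous fun η => η + gronwallBound 0 K (c * η) T :=
    continuous_id.add ((gronwallBound_continuous_ε 0 K T).comp (continuous_const_mul c))
  have hlim : Tendsto (fun η => η + gronwallBound 0 K (c * η) T) (𝓝[>] 0) (𝓝 0) := by
    simpa [gronwallBound_ε0_δ0] using (hcont.tendsto 0).mono_left nhdsWithin_le_nhds
  obtain ⟨η, hη, hle⟩ := (eventually_mem_nhdsWithin.and (hlim.eventually_le_const hε)).exists
  exact ⟨η, hη, hle⟩

lemma dist_linearInterp_le_add_gronwallBound (ht : StrictMono t) (ht_top : Tendsto t atTop atTop)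
    (hq : LipschitzWith K q) {x : ℕ → E}
    (hx : ∀ n, x (n + 1) - x n = (t (n + 1) - t n) • q (z n))
    {y : ℝ → E} {s b α β : ℝ} (hs : t 0 ≤ s) (hys : y s = linearInterp t z s)
    (hy : ContinuousOn y (Set.Icc s b))
    (hy' : ∀ u ∈ Set.Ico s b, HasDerivWithinAt y (q (y u)) (Set.Ici u) u)
    (hα : ∀ u ∈ Set.Icc s b, dist (linearInterp t (z - x) u) (linearInterp t (z - x) s) ≤ α)
    (hβ : ∀ u ∈ Set.Icc s b, dist (z (gridIndex t u)) (linearInterp t z u) ≤ β) :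
    ∀ u ∈ Set.Icc s b,
      dist (linearInterp t z u) (y u) ≤ α + gronwallBound 0 K (K * (β + α)) (u - s) := by
  let w (u : ℝ) : E := linearInterp t z s + (linearInterp t x u - linearInterp t x s)
  have hzw (u : ℝ) (hu : u ∈ Set.Icc s b) : dist (linearInterp t z u) (w u) ≤ α := by
    refine Eq.trans_le ?_ (hα u hu)
    simp only [w, dist_eq_norm, linearInterp_sub]
    congr 1
    abel
  have hw : ContinuousOn w (Set.Icc s b) :=
    continuousOn_const.add <| ((continuousOn_linearInterp ht ht_top x).mono
      fun u hu => hs.trans hu.1).sub continuousOn_const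
  have hw' (u : ℝ) (hu : u ∈ Set.Ico s b) :
      HasDerivWithinAt w (q (z (gridIndex t u))) (Set.Ici u) u := by
    have hderiv := hasDerivWithinAt_linearInterp ht ht_top x
      ⟨apply_gridIndex_le (hs.trans hu.1), lt_apply_gridIndex_succ ht_top u⟩
    rw [hx, inv_smul_smul₀ (sub_pos.2 (ht (Nat.lt_succ_self _))).ne'] at hderiv
    exact (hderiv.sub_const _).const_add _
  have hw_approx (u : ℝ) (hu : u ∈ Set.Ico s b) :
      dist (q (z (gridIndex t u))) (q (w u)) ≤ K * (β + α) := by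
    have hu' := Set.Ico_subset_Icc_self hu
    refine hq.dist_le_mul_of_le ((dist_triangle _ (linearInterp t z u) _).trans ?_)
    exact add_le_add (hβ u hu') (hzw u hu')
  have hwy := dist_le_of_approx_trajectories_ODE (v := fun _ => q) (δ := 0) (εg := 0)
    (fun _ => hq) hw hw' hw_approx hy hy' (fun _ _ => (dist_self _).le) (by simp [w, hys])
  intro u hu
  rw [add_zero] at hwy
  exact (dist_triangle _ (w u) _).trans (add_le_add (hzw u hu) (hwy u hu))

lemma eventually_dist_linearInterp_le (ht : StrictMono t) (ht_top : Tendsto t atTop atTop)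
    (hq : LipschitzWith K q) {x : ℕ → E}
    (hx : ∀ n, x (n + 1) - x n = (t (n + 1) - t n) • q (z n))
    (hz : Tendsto (fun n => dist (z n) (z (n + 1))) atTop (𝓝 0)) (hzx : CauchySeq (z - x))
    (T : ℝ) {ε : ℝ} (hε : 0 < ε) :
    ∀ᶠ s in atTop, ∀ y : ℝ → E, y s = linearInterp t z s →
      (∀ u, s ≤ u → HasDerivWithinAt y (q (y u)) (Set.Ici s) u) →
      ∀ u ∈ Set.Icc s (s + T), dist (linearInterp t z u) (y u) ≤ ε := by
  obtain ⟨η, hη, hηε⟩ := exists_pos_add_gronwallBound_le K (K * 2) T hε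
  obtain ⟨S, hS⟩ := Metric.cauchySeq_iff.1 (cauchySeq_linearInterp ht.monotone ht_top hzx) η hη
  have hnear := (tendsto_dist_gridIndex_linearInterp ht.monotone ht_top hz).eventually_le_const hη
  filter_upwards [eventually_ge_atTop S, eventually_ge_atTop (t 0),
    eventually_forall_ge_atTop.2 hnear] with s hsS hs hnear_s y hys hy u hu
  have hgronwall := dist_linearInterp_le_add_gronwallBound ht ht_top hq hx hs hys
    (fun v hv => (hy v hv.1).continuousWithinAt.mono Set.Icc_subset_Ici_self)
    (fun v hv => (hy v hv.1).mono (Set.Ici_subset_Ici.2 hv.1))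
    (fun v hv => (hS v (hsS.trans hv.1) s hsS).le) (fun v hv => hnear_s v hv.1) u hu
  have hmono : gronwallBound 0 K (K * (η + η)) (u - s) ≤ gronwallBound 0 K (K * (η + η)) T :=
    gronwallBound_mono le_rfl (by positivity) K.coe_nonneg (by linarith [hu.2])
  rw [mul_assoc, two_mul] at hηε
  linarith

end Tracking

section EulerSum

variable {E : Type*} [AddCommGroup E] [Module ℝ E]

/-- The sum of the first `n` increments `a j • q (z j)` that an Euler scheme for `ẏ = q y` with
step sizes `a` would make at the points `z j`. -/
def eulerSum (a : ℕ → ℝ) (q : E → E) (z : ℕ → E) (n : ℕ) : E :=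
  ∑ j ∈ Finset.range n, a j • q (z j)

lemma eulerSum_succ_sub (a : ℕ → ℝ) (q : E → E) (z : ℕ → E) (n : ℕ) :
    eulerSum a q z (n + 1) - eulerSum a q z n = a n • q (z n) :=
  Finset.sum_range_succ_sub_sum _

end EulerSum

section Residuals

variable {E : Type*} [NormedAddCommGroup E] [NormedSpace ℝ E] {a : ℕ → ℝ} {q : E → E} {z : ℕ → E}

lemma cauchySeq_sub_eulerSum
    (hres : ∀ ε > 0, ∃ N, ∀ n ≥ N, ∀ k,
      ‖z (n + k) - z n - ∑ j ∈ Finset.range k, a (n + j) • q (z (n + j))‖ ≤ ε) :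
    CauchySeq (z - eulerSum a q z) := by
  refine Metric.cauchySeq_iff'.2 fun ε hε => ?_
  obtain ⟨N, hN⟩ := hres (ε / 2) (half_pos hε)
  refine ⟨N, fun n hn => ?_⟩
  obtain ⟨k, rfl⟩ := Nat.exists_eq_add_of_le hn
  have hdiff : (z - eulerSum a q z) (N + k) - (z - eulerSum a q z) N =
      z (N + k) - z N - ∑ j ∈ Finset.range k, a (N + j) • q (z (N + j)) := by
    simp only [Pi.sub_apply, eulerSum, Finset.sum_range_add]
    abel
  rw [dist_eq_norm, hdiff]
  exact (hN N le_rfl k).trans_lt (half_lt_self hε)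

lemma tendsto_dist_succ_of_cauchySeq_sub_eulerSum (hcauchy : CauchySeq (z - eulerSum a q z))
    (hinc : Tendsto (fun n => a n • q (z n)) atTop (𝓝 0)) :
    Tendsto (fun n => dist (z n) (z (n + 1))) atTop (𝓝 0) := by
  have hdefect : Tendsto (fun n => dist ((z - eulerSum a q z) n) ((z - eulerSum a q z) (n + 1)))
      atTop (𝓝 0) :=
    (cauchySeq_iff_tendsto_dist_atTop_0.1 hcauchy).comp
      (prod_atTop_atTop_eq (α := ℕ) (β := ℕ) ▸ tendsto_id.prodMk (tendsto_add_atTop_nat 1))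
  refine squeeze_zero (fun _ => dist_nonneg) (fun n => ?_)
    (by simpa only [norm_zero, add_zero] using hdefect.add hinc.norm)
  have hdiff : z n - z (n + 1) =
      ((z - eulerSum a q z) n - (z - eulerSum a q z) (n + 1)) - a n • q (z n) := by
    rw [← eulerSum_succ_sub a q z n]
    simp only [Pi.sub_apply]
    abel
  rw [dist_eq_norm, dist_eq_norm, hdiff]
  exact norm_sub_le _ _

lemma tendsto_smul_comp_of_summable_sq {K : ℝ≥0} (hsq : Summable fun n => a n ^ 2)
    (hq : LipschitzWith K q) (hbd : ∃ C, ∀ n, ‖z n‖ ≤ C) :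
    Tendsto (fun n => a n • q (z n)) atTop (𝓝 0) := by
  have ha : Tendsto a atTop (𝓝 0) := by
    have habs := hsq.tendsto_atTop_zero.sqrt
    simp only [Real.sqrt_sq_eq_abs, Real.sqrt_zero] at habs
    exact (tendsto_zero_iff_abs_tendsto_zero a).2 habs
  have hz : Bornology.IsBounded (Set.range z) :=
    isBounded_iff_forall_norm_le.2 (by simpa only [Set.forall_mem_range] using hbd)
  obtain ⟨B, hB⟩ := isBounded_iff_forall_norm_le.1 (hq.isBounded_image hz)
  exact ha.zero_smul_isBoundedUnder_le
    (isBoundedUnder_of ⟨B, fun n => hB _ (Set.mem_image_of_mem q (Set.mem_range_self n))⟩)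

end Residuals

theorem fedgan_theorem1_forward_general {E : Type*} [NormedAddCommGroup E] [NormedSpace ℝ E]
    {a : ℕ → ℝ} (ha : ∀ n, 0 < a n) (hdiv : ¬ Summable a)
    {t : ℕ → ℝ} (ht : ∀ n, t n = ∑ m ∈ Finset.range n, a m)
    {z : ℕ → E} {zbar : ℝ → E}
    (hzbar : ∀ n, ∀ s ∈ Set.Icc (t n) (t (n + 1)),
      zbar s = z n + ((s - t n) / (t (n + 1) - t n)) • (z (n + 1) - z n))
    {q : E → E} {K : ℝ≥0} (hq : LipschitzWith K q)
    {zsol : ℝ → ℝ → E} (hinit : ∀ s, 0 ≤ s → zsol s s = zbar s)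
    (hode : ∀ s, 0 ≤ s → ∀ u, s ≤ u →
      HasDerivWithinAt (zsol s) (q (zsol s u)) (Set.Ici s) u)
    (hinc : Tendsto (fun n => a n • q (z n)) atTop (𝓝 0))
    (hres : ∀ ε > 0, ∃ N, ∀ n ≥ N, ∀ k,
      ‖z (n + k) - z n - ∑ j ∈ Finset.range k, a (n + j) • q (z (n + j))‖ ≤ ε)
    (T : ℝ) {ε : ℝ} (hε : 0 < ε) :
    ∃ S : ℝ, 0 ≤ S ∧ ∀ s ≥ S, ∀ u ∈ Set.Icc s (s + T), ‖zbar u - zsol s u‖ ≤ ε := by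
  have hstep (n : ℕ) : t (n + 1) - t n = a n := by
    rw [ht, ht, Finset.sum_range_succ_sub_sum]
  have ht_mono : StrictMono t := strictMono_nat_of_lt_succ fun n => sub_pos.1 (hstep n ▸ ha n)
  have ht_top : Tendsto t atTop atTop := by
    rw [funext ht]
    exact (not_summable_iff_tendsto_nat_atTop_of_nonneg fun n => (ha n).le).1 hdiv
  have hinterp (u : ℝ) (hu : 0 ≤ u) : zbar u = linearInterp t z u := by
    have hle : t (gridIndex t u) ≤ u := apply_gridIndex_le (by simpa [ht] using hu)
    rw [hzbar _ u ⟨hle, (lt_apply_gridIndex_succ ht_top u).le⟩, linearInterp,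
      AffineMap.lineMap_apply_module', add_comm]
  have hcauchy := cauchySeq_sub_eulerSum hres
  have htrack := eventually_dist_linearInterp_le ht_mono ht_top hq
    (fun n => by rw [eulerSum_succ_sub, hstep])
    (tendsto_dist_succ_of_cauchySeq_sub_eulerSum hcauchy hinc) hcauchy T hε
  obtain ⟨S, hS⟩ := eventually_atTop.1 htrack
  refine ⟨max S 0, le_max_right _ _, fun s hs u hu => ?_⟩
  have hs0 : 0 ≤ s := (le_max_right _ _).trans hs
  rw [hinterp u (hs0.trans hu.1), ← dist_eq_norm]
  exact hS s ((le_max_left _ _).trans hs) (zsol s) ((hinit s hs0).trans (hinterp s hs0))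
    (hode s hs0) u hu

end

/-- Forward half of Theorem 1 of the FedGAN paper (pathwise stochastic approximation):
if the iterates are bounded and the accumulated residuals relative to the Euler scheme
for the `L`-Lipschitz vector field `q` vanish, then the piecewise linear interpolation
`zbar` of the iterates asymptotically tracks, over any horizon `T`, the forward solution
of the limiting ODE started from the interpolated trajectory. -/
theorem fedgan_theorem1_forward {d : ℕ}
    (a : ℕ → ℝ) (ha : ∀ n, 0 < a n)
    (hdiv : ¬ Summable a) (hsq : Summable fun n => (a n) ^ 2)
    (t : ℕ → ℝ) (ht : ∀ n, t n = ∑ m ∈ Finset.range n, a m)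
    (z : ℕ → EuclideanSpace ℝ (Fin d))
    (zbar : ℝ → EuclideanSpace ℝ (Fin d))
    (hzbar : ∀ n, ∀ s ∈ Set.Icc (t n) (t (n + 1)),
      zbar s = z n + ((s - t n) / (t (n + 1) - t n)) • (z (n + 1) - z n))
    (q : EuclideanSpace ℝ (Fin d) → EuclideanSpace ℝ (Fin d))
    (L : ℝ) (hL : 0 ≤ L) (hq : ∀ x y, ‖q x - q y‖ ≤ L * ‖x - y‖)
    (zsol : ℝ → ℝ → EuclideanSpace ℝ (Fin d))
    (hinit : ∀ s, 0 ≤ s → zsol s s = zbar s)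
    (hode : ∀ s, 0 ≤ s → ∀ u, s ≤ u →
      HasDerivWithinAt (zsol s) (q (zsol s u)) (Set.Ici s) u)
    (hbd : ∃ C, ∀ n, ‖z n‖ ≤ C)
    (hres : ∀ ε > 0, ∃ N, ∀ n ≥ N, ∀ k,
      ‖z (n + k) - z n - ∑ j ∈ Finset.range k, a (n + j) • q (z (n + j))‖ ≤ ε) :
    ∀ T > 0, ∀ ε > 0, ∃ S : ℝ, 0 ≤ S ∧ ∀ s ≥ S,
      ∀ u ∈ Set.Icc s (s + T), ‖zbar u - zsol s u‖ ≤ ε := by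
  have hlip : LipschitzWith L.toNNReal q := .of_dist_le' (by simpa only [dist_eq_norm] using hq)
  exact fun T _ ε hε => fedgan_theorem1_forward_general ha hdiv ht hzbar hlip hinit hode
    (tendsto_smul_comp_of_summable_sq hsq hlip hbd) hres T hε
end
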